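/- Every finite ordinal potential game has a finite selfishness level; that is, if G is a finite strategic game admitting an ordinal potential function, then there exists α ∈ ℝ_{≥0} such that G is α-selfish. -/

import Mathlib

open Finset
open scoped ENNReal

/-- A strategic game with `n` players: each player `i` has a nonempty strategy
set `S i` and a real-valued payoff function `p i` on joint strategies. -/
structure Game (n : ℕ) where
  S : Fin n → Type
  ne : ∀ i, Nonempty (S i)
  p : Fin n → ((j : Fin n) → S j) → ℝ

namespace Game

variable {n : ℕ}

/-- The social welfare of a joint strategy. -/
def SW (G : Game n) (s : (j : Fin n) → G.S j) : ℝ := ∑ i, G.p i s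

/-- A joint strategy is a social optimum if it maximizes the social welfare. -/
def SocialOptimum (G : Game n) (s : (j : Fin n) → G.S j) : Prop :=
  ∀ t, G.SW t ≤ G.SW s

/-- A joint strategy is a (pure) Nash equilibrium if no unilateral deviation is profitable. -/
def NashEq (G : Game n) (s : (j : Fin n) → G.S j) : Prop :=
  ∀ (i : Fin n) (s' : G.S i), G.p i (Function.update s i s') ≤ G.p i s

/-- The altruistic version `G(α)` of a game `G`. -/
def alt (G : Game n) (α : ℝ) : Game n where
  S := G.S
  ne := G.ne
  p := fun i s => G.p i s + α * G.SW s

/-- `G` is `α`-selfish if some pure Nash equilibrium of `G(α)` is a social optimum of `G`. -/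
def Selfish (G : Game n) (α : ℝ) : Prop :=
  ∃ s, (G.alt α).NashEq s ∧ G.SocialOptimum s

/-- The selfishness level of `G`: the infimum of the nonnegative `α` for which `G`
is `α`-selfish (`⊤` if there is no such `α`). -/
noncomputable def selfishnessLevel (G : Game n) : ℝ≥0∞ :=
  sInf {x : ℝ≥0∞ | ∃ α : ℝ, 0 ≤ α ∧ G.Selfish α ∧ x = ENNReal.ofReal α}

/-- A social optimum is stable if no player profits from a unilateral deviation
to another social optimum. -/
def StableOptimum (G : Game n) (s : (j : Fin n) → G.S j) : Prop :=
  G.SocialOptimum s ∧ ∀ (i : Fin n) (s' : G.S i),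
    G.SocialOptimum (Function.update s i s') →
      G.p i (Function.update s i s') ≤ G.p i s

/-- The appeal factor of a unilateral deviation `s'` of player `i` from `s`. -/
noncomputable def AF (G : Game n) (s : (j : Fin n) → G.S j) (i : Fin n) (s' : G.S i) : ℝ :=
  (G.p i (Function.update s i s') - G.p i s) /
    (G.SW s - G.SW (Function.update s i s'))

end Game

/-!
Among the social optima, pick one that is maximal for the potential. No player gains by moving from
it to another social optimum, since such a gain would raise the potential. Every other deviation
strictly decreases the social welfare, so its gain is outweighed by a large enough multiple of that
loss; finitely many deviations require only a finite multiple.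
-/

namespace Game

variable {n : ℕ} {G : Game n} {s t : (j : Fin n) → G.S j} {α : ℝ}

theorem exists_socialOptimum (G : Game n) [∀ i, Finite (G.S i)] : ∃ s, G.SocialOptimum s :=
  have := G.ne
  Finite.exists_max G.SW

theorem SocialOptimum.of_SW_le (hs : G.SocialOptimum s) (hst : G.SW s ≤ G.SW t) :
    G.SocialOptimum t :=
  fun u => (hs u).trans hst

theorem nashEq_alt_iff :
    (G.alt α).NashEq s ↔ ∀ (i : Fin n) (s' : G.S i),
      G.p i (Function.update s i s') + α * G.SW (Function.update s i s') ≤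
        G.p i s + α * G.SW s :=
  Iff.rfl

theorem AF_le_iff {i : Fin n} {s' : G.S i} (h : G.SW (Function.update s i s') < G.SW s) :
    G.AF s i s' ≤ α ↔
      G.p i (Function.update s i s') + α * G.SW (Function.update s i s') ≤
        G.p i s + α * G.SW s := by
  rw [AF, div_le_iff₀ (sub_pos.2 h), mul_sub]
  constructor <;> intro hle <;> linarith

theorem StableOptimum.nashEq_alt (hs : G.StableOptimum s)
    (hα : ∀ (i : Fin n) (s' : G.S i),
      G.SW (Function.update s i s') < G.SW s → G.AF s i s' ≤ α) :
    (G.alt α).NashEq s := by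
  refine nashEq_alt_iff.2 fun i s' => ?_
  rcases (hs.1 (Function.update s i s')).eq_or_lt with hSW | hSW
  · have no_gain : G.p i (Function.update s i s') ≤ G.p i s :=
      hs.2 i s' (hs.1.of_SW_le hSW.ge)
    rw [hSW]
    gcongr
  · exact (AF_le_iff hSW).1 (hα i s' hSW)

theorem StableOptimum.exists_selfish (hs : G.StableOptimum s)
    (hAF : BddAbove (Set.range fun d : Σ i, G.S i => G.AF s d.1 d.2)) :
    ∃ α : ℝ, 0 ≤ α ∧ G.Selfish α := by
  obtain ⟨α, hα, hle⟩ := hAF.exists_ge 0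
  exact ⟨α, hα, s, hs.nashEq_alt fun i s' _ => hle _ ⟨⟨i, s'⟩, rfl⟩, hs.1⟩

variable {β : Type*} [Preorder β] {P : ((j : Fin n) → G.S j) → β}

/-- A generalized ordinal potential (Monderer–Shapley): every profitable unilateral deviation
strictly increases `P`. Unlike for an ordinal potential, the converse is not part of the notion. The
values of `P` may lie in any preorder. -/
def IsGeneralizedOrdinalPotential (G : Game n) (P : ((j : Fin n) → G.S j) → β) : Prop :=
  ∀ (i : Fin n) (s : (j : Fin n) → G.S j) (s' : G.S i),
    G.p i s < G.p i (Function.update s i s') → P s < P (Function.update s i s')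

theorem IsGeneralizedOrdinalPotential.stableOptimum_of_maximalFor
    (hP : G.IsGeneralizedOrdinalPotential P) (hs : MaximalFor G.SocialOptimum P s) :
    G.StableOptimum s :=
  ⟨hs.prop, fun i s' hopt => not_lt.1 fun hgain => hs.not_gt hopt (hP i s s' hgain)⟩

theorem IsGeneralizedOrdinalPotential.exists_stableOptimum [∀ i, Finite (G.S i)]
    (hP : G.IsGeneralizedOrdinalPotential P) : ∃ s, G.StableOptimum s := by
  obtain ⟨s, hs⟩ := (Set.toFinite {s | G.SocialOptimum s}).exists_maximalFor P _
    G.exists_socialOptimum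
  exact ⟨s, hP.stableOptimum_of_maximalFor hs⟩

end Game

theorem finite_ordinal_potential_game_selfish_general {n : ℕ} {G : Game n}
    [∀ i, Finite (G.S i)] {β : Type*} [Preorder β] {P : ((j : Fin n) → G.S j) → β}
    (hP : G.IsGeneralizedOrdinalPotential P) :
    ∃ α : ℝ, 0 ≤ α ∧ G.Selfish α := by
  obtain ⟨s, hs⟩ := hP.exists_stableOptimum
  exact hs.exists_selfish (Set.finite_range _).bddAbove

/-- every finite ordinal potential game has a finite selfishness level,
i.e., it is `α`-selfish for some `α ≥ 0`. -/
theorem finite_ordinal_potential_game_selfish {n : ℕ} (G : Game n)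
    (hfin : ∀ i, Finite (G.S i))
    (P : ((j : Fin n) → G.S j) → ℝ)
    (hP : ∀ (i : Fin n) (s : (j : Fin n) → G.S j) (s' : G.S i),
      G.p i (Function.update s i s') > G.p i s ↔ P (Function.update s i s') > P s) :
    ∃ α : ℝ, 0 ≤ α ∧ G.Selfish α :=
  finite_ordinal_potential_game_selfish_general fun i s s' => (hP i s s').1
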